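/- Let f : B → A be a homomorphism of commutative rings, and assume A is flat as a B-module. Then A is faithfully flat as a B-module if and only if for every B-module N the unit map η_N : N → (N ⊗_B A)^co, η_N(n) = n ⊗ 1, is bijective (equivalently, descent along f is effective). -/

import Mathlib

open TensorProduct

universe u

noncomputable def unitMap (B A : Type u) [CommRing B] [CommRing A] [Algebra B A]
    (N : Type u) [AddCommGroup N] [Module B N] : N →ₗ[B] N ⊗[B] A :=
  (TensorProduct.mk B N A).flip 1

/-- The action map `M ⊗_B A → M`, `m ⊗ a ↦ m · a`. -/
noncomputable def actionMap (B A : Type u) [CommRing B] [CommRing A] [Algebra B A]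
    (M : Type u) [AddCommGroup M] [Module B M] [Module A M] [IsScalarTower B A M] :
    M ⊗[B] A →ₗ[B] M :=
  TensorProduct.lift (LinearMap.mk₂ B (fun m a => a • m)
    (fun m m' a => smul_add a m m')
    (fun b m a => smul_comm a b m)
    (fun m a a' => add_smul a a' m)
    (fun b m a => smul_assoc b a m))

/-- `(M, ρ)` is a comodule over the canonical coring `A ⊗_B A`. -/
def IsCanComodule (B A : Type u) [CommRing B] [CommRing A] [Algebra B A]
    (M : Type u) [AddCommGroup M] [Module B M] [Module A M] [IsScalarTower B A M]
    (ρ : M →ₗ[B] M ⊗[B] A) : Prop :=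
  (∀ (a : A) (m : M),
      ρ (a • m) = LinearMap.lTensor M (LinearMap.mulLeft B a) (ρ m)) ∧
  (∀ m : M, LinearMap.rTensor A ρ (ρ m) = LinearMap.rTensor A (unitMap B A M) (ρ m)) ∧
  (∀ m : M, actionMap B A M (ρ m) = m)

/-- The coinvariants `M^co = {m : ρ m = m ⊗ 1}` as a `B`-submodule. -/
noncomputable def coinv (B A : Type u) [CommRing B] [CommRing A] [Algebra B A]
    (M : Type u) [AddCommGroup M] [Module B M] [Module A M] [IsScalarTower B A M]
    (ρ : M →ₗ[B] M ⊗[B] A) : Submodule B M where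
  carrier := {m | ρ m = m ⊗ₜ[B] 1}
  add_mem' := by
    intro x y hx hy
    simp only [Set.mem_setOf_eq] at *
    rw [map_add, hx, hy, add_tmul]
  zero_mem' := by simp
  smul_mem' := by
    intro b m hm
    simp only [Set.mem_setOf_eq] at *
    rw [map_smul, hm, smul_tmul']

/-- The counit map `ζ_M : M^co ⊗_B A → M`, `m ⊗ a ↦ m · a`. -/
noncomputable def counitMap (B A : Type u) [CommRing B] [CommRing A] [Algebra B A]
    (M : Type u) [AddCommGroup M] [Module B M] [Module A M] [IsScalarTower B A M]
    (ρ : M →ₗ[B] M ⊗[B] A) : (coinv B A M ρ) ⊗[B] A →ₗ[B] M :=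
  actionMap B A M ∘ₗ LinearMap.rTensor A (coinv B A M ρ).subtype

/-- Multiply the last two tensor factors. -/
noncomputable def mulLast (B A : Type u) [CommRing B] [CommRing A] [Algebra B A]
    (N : Type u) [AddCommGroup N] [Module B N] : (N ⊗[B] A) ⊗[B] A →ₗ[B] N ⊗[B] A :=
  LinearMap.lTensor N (LinearMap.mul' B A) ∘ₗ (TensorProduct.assoc B N A A).toLinearMap

/-- The difference of the two coface maps. -/
noncomputable def cofaceDiff (B A : Type u) [CommRing B] [CommRing A] [Algebra B A]
    (N : Type u) [AddCommGroup N] [Module B N] : N ⊗[B] A →ₗ[B] (N ⊗[B] A) ⊗[B] A :=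
  LinearMap.rTensor A (unitMap B A N) - unitMap B A (N ⊗[B] A)

lemma cofaceDiff_unitMap (B A : Type u) [CommRing B] [CommRing A] [Algebra B A]
    (N : Type u) [AddCommGroup N] [Module B N] (n : N) :
    cofaceDiff B A N (unitMap B A N n) = 0 := by
  simp [cofaceDiff, unitMap]

lemma mulLast_cofaceDiff (B A : Type u) [CommRing B] [CommRing A] [Algebra B A]
    (N : Type u) [AddCommGroup N] [Module B N] :
    mulLast B A (N ⊗[B] A) ∘ₗ LinearMap.rTensor A (cofaceDiff B A N) =
      LinearMap.rTensor A (unitMap B A N) ∘ₗ mulLast B A N - LinearMap.id := by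
  ext n a c
  have h : LinearMap.rTensor A (cofaceDiff B A N) ((n ⊗ₜ[B] a) ⊗ₜ[B] c) =
      ((n ⊗ₜ[B] (1 : A)) ⊗ₜ[B] a) ⊗ₜ[B] c - ((n ⊗ₜ[B] a) ⊗ₜ[B] (1 : A)) ⊗ₜ[B] c := by
    rw [LinearMap.rTensor_tmul, ← sub_tmul]
    rfl
  simp [h, mulLast, unitMap]

lemma exact_unitMap (B A : Type u) [CommRing B] [CommRing A] [Algebra B A]
    [Module.FaithfullyFlat B A] (N : Type u) [AddCommGroup N] [Module B N] :
    Function.Exact (unitMap B A N) (cofaceDiff B A N) := by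
  apply Module.FaithfullyFlat.rTensor_reflects_exact B A
  intro x
  constructor
  · intro hx
    refine ⟨mulLast B A N x, ?_⟩
    have h := LinearMap.congr_fun (mulLast_cofaceDiff B A N) x
    simp only [LinearMap.comp_apply, hx, map_zero, LinearMap.sub_apply, LinearMap.id_apply] at h
    exact (sub_eq_zero.mp h.symm)
  · rintro ⟨y, rfl⟩
    have h : cofaceDiff B A N ∘ₗ unitMap B A N = 0 :=
      LinearMap.ext (cofaceDiff_unitMap B A N)
    rw [← LinearMap.comp_apply, ← LinearMap.rTensor_comp, h, LinearMap.rTensor_zero,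
      LinearMap.zero_apply]

/-- If `A` is flat as a `B`-module, then `A` is faithfully flat as a `B`-module if and
only if for every `B`-module `N` the unit map `η_N : N → (N ⊗_B A)^co`, `n ↦ n ⊗ 1`,
is bijective. -/
theorem faithfullyFlat_iff_unit_bijective
    (B A : Type u) [CommRing B] [CommRing A] [Algebra B A] [Module.Flat B A] :
    Module.FaithfullyFlat B A ↔
    (∀ (N : Type u) [AddCommGroup N] [Module B N],
        Function.Injective (unitMap B A N) ∧
        Set.range (unitMap B A N) =
          {q : N ⊗[B] A |
            LinearMap.rTensor A (unitMap B A N) q = unitMap B A (N ⊗[B] A) q}) := by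
  constructor
  · intro _ N _ _
    constructor
    · rw [injective_iff_map_eq_zero]
      intro n hn
      rw [← Module.FaithfullyFlat.one_tmul_eq_zero_iff (A := A) B N n]
      have h := congrArg (TensorProduct.comm B N A) hn
      simpa [unitMap] using h
    · ext q
      rw [← (exact_unitMap B A N) q]
      simp [cofaceDiff, sub_eq_zero]
  · intro h
    rw [Module.FaithfullyFlat.iff_flat_and_rTensor_reflects_triviality]
    refine ⟨inferInstance, ?_⟩
    intro N _ _ hs
    exact (h N).1.subsingleton
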